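/- Let F₁, …, Fₙ be polynomials in n complex variables (elements of MvPolynomial (Fin n) ℂ), and let Z = { x : Fin n → ℂ | Fᵢ(x) = 0 for all i = 1, …, n } be their common zero set in ℂⁿ. If Z is finite, then the number of points of Z is at most d₁ · d₂ ⋯ dₙ, where dᵢ is the total degree of Fᵢ. -/

import Mathlib

/-!
Write `dᵢ = deg Fᵢ` and deform the system `Xᵢ ^ dᵢ` to `F` through
`Hᵢ = Xᵢ ^ dᵢ + t (Fᵢ - Xᵢ ^ dᵢ)` over `K[t]`. At `t = 0` the quotient by `(H)` is spanned by the
`∏ dᵢ` monomials with all exponents below `dᵢ`, so by Nakayama's lemma any polynomial `l`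
satisfies `P(l) ∈ (H)` for some nonzero `P ∈ K[t][y]` of degree at most `∏ dᵢ`. At an isolated
zero `z` of `F`, Krull's height theorem shows that a component of `{H = 0}` through `(1, z)` does
not lie in the fibre `t = 1`. Hence powers of `t - 1` can be cancelled from `P`, and setting
`t = 1` yields a nonzero one-variable polynomial of degree at most `∏ dᵢ` that vanishes at `l(z)`
for every isolated zero `z` at once. Now choose `l` to separate the isolated zeros.
-/

section

open MvPolynomial

section Height

variable {R k : Type*} [CommRing R] [Field k]

lemma height_ker_eval₂RingHom [IsNoetherianRing R] {φ : R →+* k} (hφ : Function.Surjective φ)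
    (c : k) :
    (RingHom.ker (Polynomial.eval₂RingHom φ c)).height = (RingHom.ker φ).height + 1 := by
  have hsurj : Function.Surjective (Polynomial.eval₂RingHom φ c) := fun b ↦ by
    obtain ⟨a, rfl⟩ := hφ b
    exact ⟨Polynomial.C a, by simp⟩
  have : (RingHom.ker (Polynomial.eval₂RingHom φ c)).IsMaximal :=
    RingHom.ker_isMaximal_of_surjective _ hsurj
  have : (RingHom.ker (Polynomial.eval₂RingHom φ c)).LiesOver (RingHom.ker φ) :=
    ⟨by ext; simp [Ideal.under, RingHom.mem_ker]⟩
  exact Polynomial.height_eq_height_add_one _ _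

lemma height_ker_eval₂Hom [IsNoetherianRing R] {σ : Type*} [Finite σ] {φ : R →+* k}
    (hφ : Function.Surjective φ) (x : σ → k) :
    (RingHom.ker (eval₂Hom φ x)).height = (RingHom.ker φ).height + Nat.card σ := by
  induction σ using Finite.induction_empty_option with
  | of_equiv e ih =>
    have hcomp : eval₂Hom φ (x ∘ e) = (eval₂Hom φ x).comp (renameEquiv R e).toRingEquiv := by
      ext <;> simp
    rw [← Nat.card_congr e, ← ih (x ∘ e), hcomp, ← RingHom.comap_ker]
    exact (RingEquiv.height_comap _ _).symm
  | h_empty =>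
    have hcomp : φ = (eval₂Hom φ x).comp (isEmptyRingEquiv R PEmpty).symm := by
      ext; simp
    simp only [Nat.card_of_isEmpty, Nat.cast_zero, add_zero]
    conv_rhs => rw [hcomp, ← RingHom.comap_ker]
    exact (RingEquiv.height_comap _ _).symm
  | @h_option σ _ ih =>
    have hcomp : eval₂Hom φ x = (Polynomial.eval₂RingHom (eval₂Hom φ (x ∘ some)) (x none)).comp
        (optionEquivLeft R σ).toRingEquiv := by
      ext i
      · simp
      · cases i <;> simp
    have hsurj : Function.Surjective (eval₂Hom φ (x ∘ some)) := fun b ↦ by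
      obtain ⟨a, rfl⟩ := hφ b
      exact ⟨C a, by simp⟩
    rw [hcomp, ← RingHom.comap_ker]
    refine (RingEquiv.height_comap _ _).trans ?_
    rw [height_ker_eval₂RingHom hsurj, ih, Finite.card_option, Nat.cast_add_one, add_assoc]

end Height

/-- `z` is an isolated zero of the system `F`: the point `z` is an irreducible component of the
zero locus of `F`. This is encoded by the maximal ideal of `z` being a minimal prime over `(F)`,
so that over a field that is not algebraically closed it is a geometric condition, not one on the
`K`-rational zeros alone. -/
def IsIsolatedZero {ι σ K : Type*} [Field K] (F : ι → MvPolynomial σ K) (z : σ → K) : Prop :=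
  RingHom.ker (eval z) ∈ (Ideal.span (Set.range F)).minimalPrimes

lemma ker_eval_isMaximal {σ K : Type*} [Field K] (z : σ → K) :
    (RingHom.ker (eval z)).IsMaximal :=
  RingHom.ker_isMaximal_of_surjective _ fun a ↦ ⟨C a, by simp⟩

lemma ker_eval_le_of_X_sub_C_mem {σ R : Type*} [CommRing R] {z : σ → R}
    {I : Ideal (MvPolynomial σ R)} (hI : ∀ i, X i - C (z i) ∈ I) : RingHom.ker (eval z) ≤ I := by
  have hmk : Ideal.Quotient.mk I = ((Ideal.Quotient.mk I).comp C).comp (eval z) := by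
    ext i
    · simp
    · simpa using Ideal.Quotient.eq.2 (hI i)
  intro f hf
  rw [← Ideal.Quotient.eq_zero_iff_mem, hmk, RingHom.comp_apply, hf, map_zero]

namespace IsIsolatedZero

variable {ι σ K : Type*} [Field K] {F : ι → MvPolynomial σ K} {z : σ → K}

lemma eval_eq_zero (hz : IsIsolatedZero F z) (i : ι) : eval z (F i) = 0 :=
  hz.1.2 (Ideal.subset_span ⟨i, rfl⟩)

lemma ker_eval_eq_of_le (hz : IsIsolatedZero F z) {q : Ideal (MvPolynomial σ K)} [q.IsPrime]
    (hF : ∀ i, F i ∈ q) (hq : q ≤ RingHom.ker (eval z)) : RingHom.ker (eval z) = q :=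
  (hz.2 ⟨‹_›, Ideal.span_le.2 (Set.range_subset_iff.2 hF)⟩ hq).antisymm hq

lemma map (hz : IsIsolatedZero F z) {L : Type*} [Field L] (φ : K →+* L) :
    IsIsolatedZero (fun i ↦ MvPolynomial.map φ (F i)) (φ ∘ z) := by
  refine ⟨⟨RingHom.ker_isPrime _, Ideal.span_le.2 ?_⟩, fun q ⟨_, hFq⟩ hq ↦ ?_⟩
  · rintro _ ⟨i, rfl⟩
    rw [SetLike.mem_coe, RingHom.mem_ker, ← map_eval, hz.eval_eq_zero, map_zero]
  · have hcontr : RingHom.ker (eval z) = q.comap (MvPolynomial.map φ) := by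
      refine hz.ker_eval_eq_of_le (fun i ↦ hFq (Ideal.subset_span ⟨i, rfl⟩)) fun f hf ↦ ?_
      have hφ : φ (eval z f) = 0 := by rw [map_eval]; exact hq hf
      exact (map_eq_zero φ).1 hφ
    refine ker_eval_le_of_X_sub_C_mem fun i ↦ ?_
    have hi : X i - C (z i) ∈ RingHom.ker (eval z) := by simp [RingHom.mem_ker]
    simpa [hcontr] using hi

end IsIsolatedZero

/- By the Nullstellensatz `q` is the intersection of finitely many maximal ideals. -/
lemma exists_ker_eval_le_of_finite_zeros {ι σ K : Type*} [Finite σ] [Field K] [IsAlgClosed K]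
    {F : ι → MvPolynomial σ K} (hfin : {x | ∀ i, eval x (F i) = 0}.Finite)
    {q : Ideal (MvPolynomial σ K)} [hq : q.IsPrime] (hF : ∀ i, F i ∈ q) :
    ∃ x, RingHom.ker (eval x) ≤ q := by
  have hinf : hfin.toFinset.inf (fun x ↦ RingHom.ker (eval x)) ≤ q := by
    intro f hf
    rw [← IsPrime.vanishingIdeal_zeroLocus (K := K) q, mem_vanishingIdeal_iff]
    intro x hx
    have hxF : x ∈ hfin.toFinset := by simpa using fun i ↦ hx _ (hF i)
    exact Finset.inf_le (f := fun x ↦ RingHom.ker (eval x)) hxF hf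
  obtain ⟨x, -, hx⟩ := (Ideal.IsPrime.inf_le' hq).1 hinf
  exact ⟨x, hx⟩

lemma isIsolatedZero_of_finite_zeros {ι σ K : Type*} [Finite σ] [Field K] [IsAlgClosed K]
    {F : ι → MvPolynomial σ K} (hfin : {x | ∀ i, eval x (F i) = 0}.Finite)
    {z : σ → K} (hz : ∀ i, eval z (F i) = 0) : IsIsolatedZero F z := by
  refine ⟨⟨RingHom.ker_isPrime _, Ideal.span_le.2 (Set.range_subset_iff.2 hz)⟩,
    fun q ⟨_, hFq⟩ hq ↦ ?_⟩
  obtain ⟨x, hx⟩ := exists_ker_eval_le_of_finite_zeros hfin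
    (fun i ↦ hFq (Ideal.subset_span ⟨i, rfl⟩))
  rwa [← (ker_eval_isMaximal x).eq_of_le (ker_eval_isMaximal z).ne_top (hx.trans hq)]

/- Otherwise `q` would be the maximal ideal of the point `z` of the fibre over `ker φ`, whose height
exceeds the number of equations, contradicting Krull's height theorem. -/
lemma IsIsolatedZero.not_map_ker_le_of_mem_minimalPrimes {ι R K : Type*} [Finite ι] [CommRing R]
    [IsNoetherianRing R] [Field K] {φ : R →+* K} (hφ : Function.Surjective φ)
    (hheight : (RingHom.ker φ).height ≠ 0) {H : ι → MvPolynomial ι R} {z : ι → K}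
    (hz : IsIsolatedZero (fun i ↦ MvPolynomial.map φ (H i)) z) {q : Ideal (MvPolynomial ι R)}
    (hq : q ∈ (Ideal.span (Set.range H)).minimalPrimes)
    (hqz : q ≤ RingHom.ker ((eval z).comp (MvPolynomial.map φ))) :
    ¬ (RingHom.ker φ).map C ≤ q := by
  intro hker
  rw [← ker_map] at hker
  have hsurj : Function.Surjective (MvPolynomial.map (σ := ι) φ) := map_surjective φ hφ
  have : q.IsPrime := hq.isPrime
  have : (q.map (MvPolynomial.map φ)).IsPrime := Ideal.map_isPrime_of_surjective hsurj hker
  have hqcomap : (q.map (MvPolynomial.map φ)).comap (MvPolynomial.map φ) = q := by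
    rw [Ideal.comap_map_of_surjective' _ hsurj, sup_eq_left.2 hker]
  have hpoint : RingHom.ker (eval z) = q.map (MvPolynomial.map φ) :=
    hz.ker_eval_eq_of_le (fun i ↦ Ideal.mem_map_of_mem _ (hq.1.2 (Ideal.subset_span ⟨i, rfl⟩)))
      (Ideal.map_le_iff_le_comap.2 hqz)
  have hlower : q.height = (RingHom.ker φ).height + Nat.card ι := by
    have hev : eval₂Hom φ z = (eval z).comp (MvPolynomial.map φ) := by ext <;> simp
    rw [← height_ker_eval₂Hom hφ z, hev, ← RingHom.comap_ker, hpoint, hqcomap]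
  have hupper : q.height ≤ Nat.card ι :=
    (Ideal.height_le_card_of_mem_minimalPrimes_span (Set.finite_range H) hq).trans
      (by exact_mod_cast Finite.card_range_le H)
  have hle : (RingHom.ker φ).height + Nat.card ι ≤ 0 + Nat.card ι := by
    rwa [zero_add, ← hlower]
  exact hheight (nonpos_iff_eq_zero.1
    ((ENat.add_le_add_iff_right (ENat.natCast_ne_top _)).1 hle))

lemma exists_aeval_eq_zero_of_smul_pow_mem_span {R A : Type*} [CommRing R] [IsDomain R]
    [CommRing A] [Algebra R A] {w : Set A} (hw : w.Finite) {r : R} (hr : r ≠ 0) {a : A}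
    (ha : ∀ j ≤ w.ncard, r • a ^ j ∈ Submodule.span R w) :
    ∃ P : Polynomial R, P ≠ 0 ∧ P.natDegree ≤ w.ncard ∧ Polynomial.aeval a P = 0 := by
  classical
  have : Fintype w := hw.fintype
  have hdep : ¬ LinearIndependent R fun j : Fin (w.ncard + 1) ↦ r • a ^ (j : ℕ) := fun hind ↦ by
    have hcard := linearIndependent_le_span' _ hind w
      (Set.range_subset_iff.2 fun j ↦ ha j (Nat.lt_succ_iff.1 j.2))
    simp [Set.fintypeCard_eq_ncard] at hcard
  obtain ⟨g, hg, j, hj⟩ := Fintype.not_linearIndependent_iff.1 hdep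
  generalize w.ncard = D at g hg j hj ⊢
  have hg0 : Polynomial.ofFn (D + 1) g ≠ 0 := fun h ↦ hj <| by
    rw [← Polynomial.ofFn_coeff_eq_val_of_lt g j.2, h, Polynomial.coeff_zero]
  have hdeg : (Polynomial.ofFn (D + 1) g).natDegree ≤ D :=
    Nat.lt_succ_iff.1 (Polynomial.ofFn_natDegree_lt (Nat.le_add_left 1 _) g)
  refine ⟨Polynomial.C r * Polynomial.ofFn (D + 1) g,
    mul_ne_zero (Polynomial.C_ne_zero.2 hr) hg0,
    (Polynomial.natDegree_C_mul_le _ _).trans hdeg, ?_⟩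
  rw [← hg, Polynomial.ofFn_eq_sum_monomial, map_mul, map_sum, Finset.mul_sum]
  refine Finset.sum_congr rfl fun i _ ↦ ?_
  rw [Polynomial.aeval_C, Polynomial.aeval_monomial, ← Algebra.smul_def, ← Algebra.smul_def,
    smul_comm]

/-- The box of exponents `a` with `aᵢ < dᵢ`: the monomials forming a basis of the polynomial ring
modulo the powers `Xᵢ ^ dᵢ`. -/
def exponentBox {ι : Type*} (d : ι → ℕ) : Set (ι →₀ ℕ) := {a | ∀ i, a i < d i}

lemma finite_exponentBox {ι : Type*} [Finite ι] (d : ι → ℕ) : (exponentBox d).Finite :=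
  (Set.Finite.pi' fun i ↦ Set.finite_Iio (d i)).preimage DFunLike.coe_injective.injOn

lemma ncard_exponentBox {ι : Type*} [Fintype ι] (d : ι → ℕ) :
    (exponentBox d).ncard = ∏ i, d i := by
  classical
  have himage : Finsupp.equivFunOnFinite '' exponentBox d =
      Fintype.piFinset fun i ↦ Finset.range (d i) := by
    ext f
    simp [exponentBox]
  rw [← Set.ncard_image_of_injective _ Finsupp.equivFunOnFinite.injective, himage,
    Set.ncard_coe_finset, Fintype.card_piFinset]
  simp

/-- The system `Xᵢ ^ dᵢ + s Gᵢ`, seen as a deformation with parameter `s` of the pure powers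
`Xᵢ ^ dᵢ`. -/
noncomputable def powerDeformation {ι R : Type*} [CommRing R] (d : ι → ℕ) (s : R)
    (G : ι → MvPolynomial ι R) (i : ι) : MvPolynomial ι R :=
  X i ^ d i + C s * G i

section PowerDeformation

variable {ι R : Type*} [CommRing R] {d : ι → ℕ} {s : R} {G : ι → MvPolynomial ι R}

lemma monomial_mem_powerDeformation_sup (hG : ∀ i, (G i).totalDegree ≤ d i) {N : ℕ} {a : ι →₀ ℕ}
    (haN : a.degree ≤ N) {i : ι} (hai : d i ≤ a i) :
    monomial a 1 ∈ (Ideal.span (Set.range (powerDeformation d s G))).restrictScalars R ⊔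
      Ideal.span {s} • restrictTotalDegree ι R N := by
  obtain ⟨b, rfl⟩ : ∃ b, a = b + Finsupp.single i (d i) :=
    ⟨a - Finsupp.single i (d i), (tsub_add_cancel_of_le (by simpa using hai)).symm⟩
  have hreduce : monomial (b + Finsupp.single i (d i)) (1 : R) =
      monomial b 1 * powerDeformation d s G i + s • -(monomial b 1 * G i) := by
    rw [powerDeformation, X_pow_eq_monomial, smul_eq_C_mul, mul_add, monomial_mul]
    ring_nf
  have hdeg : (-(monomial b 1 * G i)).totalDegree ≤ N := by
    rw [totalDegree_neg]
    calc (monomial b 1 * G i).totalDegree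
        ≤ (monomial b (1 : R)).totalDegree + (G i).totalDegree := totalDegree_mul _ _
      _ ≤ b.degree + d i := add_le_add (totalDegree_monomial_le b 1) (hG i)
      _ ≤ N := by simpa using haN
  rw [hreduce]
  exact Submodule.add_mem_sup (Ideal.mul_mem_left _ _ (Ideal.subset_span ⟨i, rfl⟩))
    (Submodule.smul_mem_smul (Ideal.mem_span_singleton_self s)
      ((mem_restrictTotalDegree _ _ _).2 hdeg))

lemma restrictTotalDegree_le_powerDeformation_sup (hG : ∀ i, (G i).totalDegree ≤ d i) (N : ℕ) :
    restrictTotalDegree ι R N ≤ restrictSupport R (exponentBox d) ⊔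
      (Ideal.span (Set.range (powerDeformation d s G))).restrictScalars R ⊔
      Ideal.span {s} • restrictTotalDegree ι R N := by
  conv_lhs => rw [restrictTotalDegree, restrictSupport_eq_span]
  rw [Submodule.span_le]
  rintro _ ⟨a, haN, rfl⟩
  by_cases ha : a ∈ exponentBox d
  · exact Submodule.mem_sup_left
      (Submodule.mem_sup_left ((monomial_mem_restrictSupport R).2 (.inl ha)))
  · simp only [exponentBox, Set.mem_ofPred_eq, not_forall, not_lt] at ha
    obtain ⟨i, hai⟩ := ha
    rw [sup_assoc]
    exact Submodule.mem_sup_right (monomial_mem_powerDeformation_sup hG haN hai)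

/- Nakayama's lemma. Bounding the total degree is what makes the modules involved finitely
generated. -/
lemma exists_smul_mem_powerDeformation_sup [Finite ι] (hG : ∀ i, (G i).totalDegree ≤ d i) (N : ℕ) :
    ∃ r : R, r - 1 ∈ Ideal.span {s} ∧ ∀ f : MvPolynomial ι R, f.totalDegree ≤ N →
      r • f ∈ restrictSupport R (exponentBox d) ⊔
        (Ideal.span (Set.range (powerDeformation d s G))).restrictScalars R := by
  obtain ⟨r, hr, hle⟩ := Submodule.exists_sub_one_mem_and_smul_le_of_fg_of_le_sup
    (Module.Finite.iff_fg.1 inferInstance) le_rfl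
    (restrictTotalDegree_le_powerDeformation_sup (s := s) hG N)
  exact ⟨r, hr, fun f hf ↦ hle
    (Submodule.smul_mem_pointwise_smul f r _ ((mem_restrictTotalDegree _ _ _).2 hf))⟩

lemma exists_aeval_mem_span_powerDeformation [Fintype ι] [IsDomain R] (hs : ¬ IsUnit s)
    (hG : ∀ i, (G i).totalDegree ≤ d i) (l : MvPolynomial ι R) :
    ∃ P : Polynomial R, P ≠ 0 ∧ P.natDegree ≤ ∏ i, d i ∧
      Polynomial.aeval l P ∈ Ideal.span (Set.range (powerDeformation d s G)) := by
  set J := Ideal.span (Set.range (powerDeformation d s G))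
  obtain ⟨r, hr, hrmem⟩ :=
    exists_smul_mem_powerDeformation_sup (s := s) hG ((∏ i, d i) * l.totalDegree)
  have hr0 : r ≠ 0 := by
    rintro rfl
    exact hs (isUnit_of_dvd_unit (Ideal.mem_span_singleton.1 hr) (by simp))
  set w := Ideal.Quotient.mkₐ R J '' ((monomial · 1) '' exponentBox d)
  have hbox := (finite_exponentBox d).image (monomial · (1 : R))
  have hcard : w.ncard ≤ ∏ i, d i := (Set.ncard_image_le hbox).trans <|
    (Set.ncard_image_le (finite_exponentBox d)).trans_eq (ncard_exponentBox d)
  have hpow (j : ℕ) (hj : j ≤ w.ncard) :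
      r • Ideal.Quotient.mkₐ R J l ^ j ∈ Submodule.span R w := by
    obtain ⟨u, hu, v, hv, huv⟩ := Submodule.mem_sup.1 <| hrmem (l ^ j) <|
      (totalDegree_pow l j).trans (Nat.mul_le_mul_right _ (hj.trans hcard))
    have hmk : r • Ideal.Quotient.mkₐ R J l ^ j = Ideal.Quotient.mkₐ R J u := by
      rw [← map_pow, ← map_smul, ← huv, map_add, add_eq_left]
      exact Ideal.Quotient.eq_zero_iff_mem.2 hv
    have himage : Submodule.span R w =
        (restrictSupport R (exponentBox d)).map (Ideal.Quotient.mkₐ R J).toLinearMap := by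
      rw [restrictSupport_eq_span, Submodule.map_span]
      rfl
    rw [hmk, himage]
    exact Submodule.mem_map_of_mem hu
  obtain ⟨P, hP0, hPdeg, hP⟩ :=
    exists_aeval_eq_zero_of_smul_pow_mem_span (hbox.image _) hr0 hpow
  refine ⟨P, hP0, hPdeg.trans hcard, Ideal.Quotient.eq_zero_iff_mem.1 ?_⟩
  rwa [Polynomial.aeval_algHom_apply] at hP

end PowerDeformation

lemma exists_eq_C_pow_mul_map_evalRingHom_ne_zero {K : Type*} [Field K] (c : K)
    {P : Polynomial (Polynomial K)} (hP : P ≠ 0) :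
    ∃ (k : ℕ) (Q : Polynomial (Polynomial K)),
      P = .C ((.X - .C c) ^ k) * Q ∧ Q.map (Polynomial.evalRingHom c) ≠ 0 := by
  have hunit : ¬ IsUnit (Polynomial.C (.X - .C c : Polynomial K)) :=
    Polynomial.isUnit_C.not.2 (Polynomial.not_isUnit_X_sub_C c)
  obtain ⟨Q, hQ, hdvd⟩ :=
    (FiniteMultiplicity.of_not_isUnit hunit hP).exists_eq_pow_mul_and_not_dvd
  refine ⟨_, Q, by rwa [Polynomial.C_pow], fun hzero ↦ hdvd ?_⟩
  refine (Polynomial.C_dvd_iff_dvd_coeff _ _).2 fun i ↦ Polynomial.dvd_iff_isRoot.2 ?_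
  simpa using congrArg (Polynomial.coeff · i) hzero

lemma exists_injOn_eval_of_finite {σ K : Type*} [Finite σ] [Field K] [Infinite K]
    {S : Set (σ → K)} (hS : S.Finite) :
    ∃ l : MvPolynomial σ K, S.InjOn (eval · l) := by
  classical
  have := Fintype.ofFinite σ
  have : Finite S := hS
  obtain ⟨f, hf⟩ := Module.exists_dual_forall_apply_ne_zero (K := K)
    (fun p : {p : S × S // p.1 ≠ p.2} ↦ (p.1.1 : σ → K) - p.1.2)
    fun p h ↦ p.2 (Subtype.ext (sub_eq_zero.1 h))
  have heval (z : σ → K) : eval z (∑ i, C (f (Pi.single i 1)) * X i) = f z := by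
    conv_rhs => rw [pi_eq_sum_univ' z]
    simp [mul_comm]
  refine ⟨∑ i, C (f (Pi.single i 1)) * X i, fun a ha b hb hab ↦ ?_⟩
  by_contra hne
  simp only [heval] at hab
  exact hf ⟨(⟨a, ha⟩, ⟨b, hb⟩), fun h ↦ hne (congrArg Subtype.val h)⟩ (by simp [hab])

lemma totalDegree_map_le {σ R S : Type*} [CommSemiring R] [CommSemiring S] (f : R →+* S)
    (p : MvPolynomial σ R) : (map f p).totalDegree ≤ p.totalDegree :=
  Finset.sup_mono (support_map_subset _ _)

lemma IsIsolatedZero.eval_map_eq_zero_of_pow_mul_mem_span {ι R K : Type*} [Finite ι] [CommRing R]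
    [IsNoetherianRing R] [Field K] {φ : R →+* K} (hφ : Function.Surjective φ)
    (hheight : (RingHom.ker φ).height ≠ 0) {a : R} (ha : RingHom.ker φ = Ideal.span {a})
    {H : ι → MvPolynomial ι R} {z : ι → K}
    (hz : IsIsolatedZero (fun i ↦ MvPolynomial.map φ (H i)) z) {k : ℕ} {f : MvPolynomial ι R}
    (hf : C a ^ k * f ∈ Ideal.span (Set.range H)) : eval z (MvPolynomial.map φ f) = 0 := by
  have hprime : (RingHom.ker ((eval z).comp (MvPolynomial.map φ))).IsPrime :=
    RingHom.ker_isPrime _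
  have hle : Ideal.span (Set.range H) ≤ RingHom.ker ((eval z).comp (MvPolynomial.map φ)) :=
    Ideal.span_le.2 (Set.range_subset_iff.2 hz.eval_eq_zero)
  obtain ⟨q, hq, hqz⟩ := Ideal.exists_minimalPrimes_le hle
  have : q.IsPrime := hq.isPrime
  have haq : C a ∉ q := by
    simpa [ha, Ideal.map_span, Ideal.span_singleton_le_iff_mem] using
      hz.not_map_ker_le_of_mem_minimalPrimes hφ hheight hq hqz
  exact hqz ((this.mem_or_mem (hq.1.2 hf)).resolve_left fun h ↦ haq (this.mem_of_pow_mem k h))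

lemma exists_forall_isIsolatedZero_eval_eval_eq_zero {ι K : Type*} [Fintype ι] [Field K]
    (F : ι → MvPolynomial ι K) (l : MvPolynomial ι K) :
    ∃ p : Polynomial K, p ≠ 0 ∧ p.natDegree ≤ ∏ i, (F i).totalDegree ∧
      ∀ z, IsIsolatedZero F z → p.eval (eval z l) = 0 := by
  set φ : Polynomial K →+* K := Polynomial.evalRingHom 1
  have hφ : Function.Surjective φ := fun a ↦ ⟨.C a, by simp [φ]⟩
  have hφC (f : MvPolynomial ι K) : map φ (map Polynomial.C f) = f := by
    rw [map_map, show φ.comp Polynomial.C = RingHom.id K by ext; simp [φ], map_id]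
  have hker : RingHom.ker φ = Ideal.span {.X - .C 1} := Polynomial.ker_evalRingHom 1
  have hheight : (RingHom.ker φ).height ≠ 0 := by
    rw [show φ = Polynomial.eval₂RingHom (RingHom.id K) 1 from rfl,
      height_ker_eval₂RingHom Function.surjective_id]
    simp
  set G : ι → MvPolynomial ι (Polynomial K) := fun i ↦
    map Polynomial.C (F i) - X i ^ (F i).totalDegree
  have hG (i : ι) : (G i).totalDegree ≤ (F i).totalDegree :=
    (totalDegree_sub _ _).trans (max_le (totalDegree_map_le _ _) (totalDegree_X_pow _ _).le)
  have hF : (fun i ↦ map φ (powerDeformation (fun i ↦ (F i).totalDegree) .X G i)) = F := by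
    ext1 i
    simp [powerDeformation, G, hφC, φ]
  obtain ⟨P, hP0, hPdeg, hP⟩ := exists_aeval_mem_span_powerDeformation
    Polynomial.not_isUnit_X hG (map Polynomial.C l)
  obtain ⟨k, Q, rfl, hQ⟩ := exists_eq_C_pow_mul_map_evalRingHom_ne_zero 1 hP0
  have hk : (.X - .C 1 : Polynomial K) ^ k ≠ 0 := pow_ne_zero k (Polynomial.X_sub_C_ne_zero 1)
  rw [Polynomial.natDegree_C_mul hk] at hPdeg
  rw [map_mul, Polynomial.aeval_C, algebraMap_eq, map_pow] at hP
  refine ⟨Q.map φ, hQ, Polynomial.natDegree_map_le.trans hPdeg, fun z hz ↦ ?_⟩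
  rw [← hF] at hz
  have hzero := hz.eval_map_eq_zero_of_pow_mul_mem_span hφ hheight hker hP
  have hcomp : ((eval z).comp (map φ)).comp (algebraMap (Polynomial K) _) = φ := by
    ext <;> simp
  rw [← RingHom.comp_apply, Polynomial.aeval_def, Polynomial.hom_eval₂, hcomp, RingHom.comp_apply,
    hφC, ← Polynomial.eval_map] at hzero
  exact hzero

lemma encard_isIsolatedZero_le_of_infinite {ι K : Type*} [Fintype ι] [Field K] [Infinite K]
    (F : ι → MvPolynomial ι K) :
    {z | IsIsolatedZero F z}.encard ≤ ((∏ i, (F i).totalDegree : ℕ) : ℕ∞) := by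
  by_contra! hlt
  obtain ⟨S, hS, hScard⟩ := Set.exists_subset_encard_eq (Order.add_one_le_of_lt hlt)
  have hSfin : S.Finite := Set.finite_of_encard_eq_coe (k := ∏ i, (F i).totalDegree + 1)
    (by rw [hScard, Nat.cast_add_one])
  obtain ⟨l, hl⟩ := exists_injOn_eval_of_finite hSfin
  obtain ⟨p, hp0, hpdeg, hp⟩ := exists_forall_isIsolatedZero_eval_eval_eq_zero F l
  have hroots : (eval · l) '' S ⊆ p.rootSet K := by
    rintro _ ⟨z, hz, rfl⟩
    exact (Polynomial.mem_rootSet_of_ne hp0).2 (by simpa using hp z (hS hz))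
  have hle : S.encard ≤ ((∏ i, (F i).totalDegree : ℕ) : ℕ∞) := calc
    S.encard = ((eval · l) '' S).encard := hl.encard_image.symm
    _ ≤ (p.rootSet K).encard := Set.encard_le_encard hroots
    _ = (p.rootSet K).ncard := (p.rootSet_finite K).cast_ncard_eq.symm
    _ ≤ (∏ i, (F i).totalDegree : ℕ) := by exact_mod_cast (p.ncard_rootSet_le K).trans hpdeg
  rw [hScard] at hle
  exact (ENat.lt_add_one_iff (ENat.natCast_ne_top _)).2 le_rfl |>.not_ge hle

theorem bezout_inequality_general {ι K : Type*} [Fintype ι] [Field K]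
    (F : ι → MvPolynomial ι K) :
    {z | IsIsolatedZero F z}.encard ≤ ((∏ i, (F i).totalDegree : ℕ) : ℕ∞) := by
  set φ := algebraMap K (AlgebraicClosure K)
  have hφ : Function.Injective fun z : ι → K ↦ φ ∘ z := φ.injective.comp_left
  calc {z | IsIsolatedZero F z}.encard
      = ((φ ∘ ·) '' {z | IsIsolatedZero F z}).encard := (hφ.encard_image _).symm
    _ ≤ {z | IsIsolatedZero (fun i ↦ map φ (F i)) z}.encard :=
      Set.encard_le_encard (Set.image_subset_iff.2 fun z hz ↦ hz.map φ)
    _ ≤ (∏ i, (map φ (F i)).totalDegree : ℕ) := encard_isIsolatedZero_le_of_infinite _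
    _ ≤ (∏ i, (F i).totalDegree : ℕ) := by
      exact_mod_cast Finset.prod_le_prod' fun i _ ↦ totalDegree_map_le φ (F i)

end

/-- Bézout's inequality: if `F₁, …, Fₙ` are polynomials in `n` complex variables whose
common zero set `Z ⊆ ℂⁿ` is finite, then the number of points of `Z` is at most the
product of the total degrees of the `Fᵢ`. -/
theorem bezout_inequality
    (n : ℕ) (F : Fin n → MvPolynomial (Fin n) ℂ)
    (Z : Set (Fin n → ℂ)) (hZ : Z = {x | ∀ i, MvPolynomial.eval x (F i) = 0})
    (hZfin : Z.Finite) :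
    Z.ncard ≤ ∏ i, (F i).totalDegree := by
  subst hZ
  have hisolated : {x | ∀ i, MvPolynomial.eval x (F i) = 0} ⊆ {z | IsIsolatedZero F z} :=
    fun z hz ↦ isIsolatedZero_of_finite_zeros hZfin hz
  exact ENat.toNat_le_of_le_natCast
    ((Set.encard_le_encard hisolated).trans (bezout_inequality_general F))
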